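/- Let x_1,…,x_n ∈ ℝ^{1+d}, let y_1,…,y_n ∈ [0,1], let z_1,…,z_n ∈ ℝ be arbitrary, and set Δ_i = (4 σ(z_i) − 6 σ(z_i)² − 2 y_i + 4 y_i σ(z_i)) σ(z_i) (1 − σ(z_i)). Then Σ_{i=1}^n Δ_i x_i x_iᵀ ≤ 0.155 · Σ_{i=1}^n x_i x_iᵀ = 0.155 · XᵀX in the Loewner order. In particular, each diagonal Hessian block of the LFFR loss L_2 (with targets in [0,1]) is bounded above in the Loewner order by 0.155 · XᵀX at every weight vector. -/

import Mathlib

open Matrix BigOperators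

/-- The logistic (sigmoid) function `σ(z) = 1/(1 + exp(−z))`. -/
noncomputable def sigmoid (z : ℝ) : ℝ := 1 / (1 + Real.exp (-z))

/-!
Since `Δ` is affine in the label `y`, it suffices to bound it at `y = 0` and `y = 1`, and these two
cases are exchanged by `s ↦ 1 - s`. At `y = 0` it is the quartic `4 s² - 10 s³ + 6 s⁴`, whose
maximum on `[0, 1]`, at the root `(15 - √33) / 24` of its derivative, is about `0.15406`. The
matrix inequality follows because every `xᵢ xᵢᵀ` is positive semidefinite.
-/

section

variable {ι m n R : Type*}

lemma transpose_mul_eq_sum_vecMulVec [Fintype ι] [NonUnitalNonAssocSemiring R]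
    (A : Matrix ι m R) (B : Matrix ι n R) : Aᵀ * B = ∑ i, vecMulVec (A i) (B i) := by
  ext a b
  simp only [mul_apply, transpose_apply, Matrix.sum_apply, vecMulVec_apply]

lemma posSemidef_smul_sum_sub_sum_smul {α : Type*} [CommRing α] [PartialOrder α] [StarRing α]
    [StarOrderedRing α] [Ring R] [PartialOrder R] [AddLeftMono R] [StarRing R] [Algebra α R]
    [StarModule α R] [PosSMulMono α R] {s : Finset ι} {P : ι → Matrix n n R} {w : ι → α} {c : α}
    (hP : ∀ i ∈ s, (P i).PosSemidef) (hw : ∀ i ∈ s, w i ≤ c) :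
    (c • ∑ i ∈ s, P i - ∑ i ∈ s, w i • P i).PosSemidef := by
  have key : c • ∑ i ∈ s, P i - ∑ i ∈ s, w i • P i = ∑ i ∈ s, (c - w i) • P i := by
    simp only [Finset.smul_sum, sub_smul, Finset.sum_sub_distrib]
  rw [key]
  exact posSemidef_sum s fun i hi => (hP i hi).smul (sub_nonneg.2 (hw i hi))

end

lemma sigmoid_eq_real_sigmoid (z : ℝ) : sigmoid z = Real.sigmoid z := one_div _

lemma sigmoid_mem_Icc (z : ℝ) : sigmoid z ∈ Set.Icc (0 : ℝ) 1 := by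
  rw [sigmoid_eq_real_sigmoid]
  exact ⟨Real.sigmoid_nonneg z, Real.sigmoid_le_one z⟩

/-- The second derivative of the squared error `z ↦ (σ(z) - y)²`, encoded as a polynomial in the
prediction `s = σ(z)`, so that it can be bounded over all `s ∈ [0, 1]`. -/
def squaredErrorCurvature (s y : ℝ) : ℝ :=
  (4 * s - 6 * s ^ 2 - 2 * y + 4 * y * s) * s * (1 - s)

/-- The maximum of `squaredErrorCurvature` over `[0, 1] × [0, 1]`, encoded as its value at a point
where it is attained. -/
noncomputable def maxSquaredErrorCurvature : ℝ := squaredErrorCurvature ((15 - √33) / 24) 0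

lemma maxSquaredErrorCurvature_eq : maxSquaredErrorCurvature = (39 + 55 * √33) / 2304 := by
  have sq_sqrt : √33 ^ 2 = (33 : ℝ) := Real.sq_sqrt (by norm_num)
  rw [maxSquaredErrorCurvature, squaredErrorCurvature]
  grind

lemma maxSquaredErrorCurvature_le : maxSquaredErrorCurvature ≤ 0.155 := by
  have sqrt_le : √33 ≤ (5.75 : ℝ) := Real.sqrt_le_iff.2 (by norm_num)
  rw [maxSquaredErrorCurvature_eq]
  linarith

namespace squaredErrorCurvature

lemma eq_convex_comb (s y : ℝ) :
    squaredErrorCurvature s y =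
      (1 - y) * squaredErrorCurvature s 0 + y * squaredErrorCurvature s 1 := by
  unfold squaredErrorCurvature
  ring

lemma one_sub_one_sub (s y : ℝ) :
    squaredErrorCurvature (1 - s) (1 - y) = squaredErrorCurvature s y := by
  unfold squaredErrorCurvature
  ring

lemma zero_right_le {s : ℝ} (hs : s ∈ Set.Icc (0 : ℝ) 1) :
    squaredErrorCurvature s 0 ≤ maxSquaredErrorCurvature := by
  obtain ⟨hs₀, hs₁⟩ := hs
  have sq_sqrt : √33 ^ 2 = (33 : ℝ) := Real.sq_sqrt (by norm_num)
  have le_sqrt : (5.5 : ℝ) ≤ √33 := Real.le_sqrt_of_sq_le (by norm_num)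
  -- The double root is the maximiser; the cofactor is written in the Bernstein basis of `[0, 1]`.
  have factorization : maxSquaredErrorCurvature - squaredErrorCurvature s 0 =
      (s - (15 - √33) / 24) ^ 2 *
        ((21 + 5 * √33) / 48 * (1 - s) + (29 * √33 - 147) / 48 * s + 6 * (s * (1 - s))) := by
    rw [maxSquaredErrorCurvature_eq, squaredErrorCurvature]
    linear_combination
      (43 / 9216 + 5 / 384 * s - s ^ 2 / 32 - √33 * (5 / 27648 + s / 1152)) * sq_sqrt
  have cofactor_nonneg :
      0 ≤ (21 + 5 * √33) / 48 * (1 - s) + (29 * √33 - 147) / 48 * s + 6 * (s * (1 - s)) := by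
    have : 0 ≤ 1 - s := sub_nonneg.2 hs₁
    have : 0 ≤ 29 * √33 - 147 := by linarith
    positivity
  exact sub_nonneg.1 (factorization ▸ mul_nonneg (sq_nonneg _) cofactor_nonneg)

lemma le_of_mem_Icc {s y : ℝ} (hs : s ∈ Set.Icc (0 : ℝ) 1) (hy : y ∈ Set.Icc (0 : ℝ) 1) :
    squaredErrorCurvature s y ≤ maxSquaredErrorCurvature := by
  have h_zero : squaredErrorCurvature s 0 ≤ maxSquaredErrorCurvature := zero_right_le hs
  have h_one : squaredErrorCurvature s 1 ≤ maxSquaredErrorCurvature := by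
    rw [← one_sub_one_sub, sub_self]
    exact zero_right_le (Set.Icc.one_sub_mem hs)
  rw [eq_convex_comb]
  calc (1 - y) * squaredErrorCurvature s 0 + y * squaredErrorCurvature s 1
      ≤ (1 - y) * maxSquaredErrorCurvature + y * maxSquaredErrorCurvature := by
        have hy₀ : 0 ≤ y := hy.1
        have hy₁ : 0 ≤ 1 - y := sub_nonneg.2 hy.2
        gcongr
    _ = maxSquaredErrorCurvature := by ring

end squaredErrorCurvature

theorem stmt14_general {ι κ : Type*} [Fintype ι] [Finite κ] (X : Matrix ι κ ℝ) {s y : ι → ℝ}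
    (hs : ∀ i, s i ∈ Set.Icc (0 : ℝ) 1) (hy : ∀ i, y i ∈ Set.Icc (0 : ℝ) 1) {c : ℝ}
    (hc : maxSquaredErrorCurvature ≤ c) :
    Xᵀ * X = ∑ i, vecMulVec (X i) (X i) ∧
      (c • (Xᵀ * X) -
        ∑ i, squaredErrorCurvature (s i) (y i) • vecMulVec (X i) (X i)).PosSemidef := by
  have gram : Xᵀ * X = ∑ i, vecMulVec (X i) (X i) := transpose_mul_eq_sum_vecMulVec X X
  refine ⟨gram, gram ▸ posSemidef_smul_sum_sub_sum_smul (fun i _ => ?_) fun i _ => ?_⟩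
  · exact posSemidef_vecMulVec_self_star (X i)
  · exact (squaredErrorCurvature.le_of_mem_Icc (hs i) (hy i)).trans hc

/-- With `yᵢ ∈ [0,1]`, arbitrary `zᵢ ∈ ℝ`, and
`Δᵢ = (4σ(zᵢ) − 6σ(zᵢ)² − 2yᵢ + 4yᵢσ(zᵢ))σ(zᵢ)(1 − σ(zᵢ))`, one has
`∑ᵢ Δᵢ xᵢxᵢᵀ ≤ 0.155 · ∑ᵢ xᵢxᵢᵀ = 0.155 · XᵀX` in the Loewner order. -/
theorem stmt14 (n d : ℕ) (x : Fin n → Fin (1 + d) → ℝ)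
    (X : Matrix (Fin n) (Fin (1 + d)) ℝ) (hX : X = Matrix.of x)
    (y z : Fin n → ℝ) (hy : ∀ i, y i ∈ Set.Icc (0 : ℝ) 1)
    (Δ : Fin n → ℝ)
    (hΔ : ∀ i, Δ i = (4 * sigmoid (z i) - 6 * sigmoid (z i) ^ 2 - 2 * y i
        + 4 * y i * sigmoid (z i)) * sigmoid (z i) * (1 - sigmoid (z i))) :
    Xᵀ * X = ∑ i, Matrix.vecMulVec (x i) (x i) ∧
      ((0.155 : ℝ) • (Xᵀ * X) - ∑ i, Δ i • Matrix.vecMulVec (x i) (x i)).PosSemidef := by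
  obtain rfl : Δ = fun i => squaredErrorCurvature (sigmoid (z i)) (y i) := funext hΔ
  exact hX ▸ stmt14_general (.of x) (fun i => sigmoid_mem_Icc (z i)) hy maxSquaredErrorCurvature_le
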